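/- Let t ≥ 4 be an even integer and let M be a matroid admitting a cyclic (t−1,t)-ordering e_1, e_2, …, e_n with n ≥ 6t−10. Then: (i) for every index i, exactly one of the sets σ[i, i+t−1] = {e_i, …, e_{i+t−1}} and σ[i+1, i+t] = {e_{i+1}, …, e_{i+t}} is a t-element circuit of M; (ii) for every index i, σ[i, i+t−1] is a t-element circuit if and only if it is a t-element cocircuit; and (iii) for all indices i and j with j ≡ i (mod 2), if σ[i, i+t−1] is a t-element circuit then σ[j, j+t−1] is a t-element circuit. -/

import Mathlib

open Set

namespace CyclicArr

variable {α : Type*}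

/-- `C` is a circuit of the matroid `M`: a minimal dependent set. -/
def Cct (M : Matroid α) (C : Set α) : Prop := Minimal M.Dep C

/-- The set of `len` consecutive elements `{e_i, e_{i+1}, …, e_{i+len-1}}`
in a cyclic ordering `e`, subscripts mod `n`. -/
def seg {n : ℕ} (e : ZMod n → α) (i : ℤ) (len : ℕ) : Set α :=
  (fun k : ℕ => e ((i + k : ℤ) : ZMod n)) '' Set.Iio len

/-- `e` is a cyclic ordering of (the ground set of) `M`. -/
def CyclicOrd {n : ℕ} (M : Matroid α) (e : ZMod n → α) : Prop :=
  Function.Injective e ∧ Set.range e = M.E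

/-- `e` is a cyclic `(t-1, t)`-ordering of `M`: every `t-1` consecutive elements
are contained in a `t`-element circuit and a `t`-element cocircuit. -/
def CyclicPropOrd {n : ℕ} (M : Matroid α) (t : ℕ) (e : ZMod n → α) : Prop :=
  CyclicOrd M e ∧
  ∀ i : ℤ, (∃ C, Cct M C ∧ C.ncard = t ∧ seg e i (t-1) ⊆ C) ∧
           (∃ C, Cct M✶ C ∧ C.ncard = t ∧ seg e i (t-1) ⊆ C)


/-!
Put `w = t - 1`. Each window `X_i` of `w` consecutive elements is completed to a `t`-element circuit
by one element, at position `c i`, and to a `t`-element cocircuit by one element, at position `d i`.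
A circuit and a cocircuit never meet in exactly one element. Hence, if `X_i` and `X_j` are disjoint,
then `c i` lies in `X_j` exactly when `d j` lies in `X_i`, and if `X_i` and `X_j` share one element,
then `c i` lies in `X_j`, or `d j` lies in `X_i`, or the two positions agree.

From this, `c i` and `d i` are at distance at most `2 * w - 2` from `X_i`: if `d p` were further
away, then `c p` would have to lie in two disjoint windows, one on each side of `d p`. A descent
on the largest distance `δ`, using `n ≥ 6 * t - 10`, then brings `δ` down to `1`, so `X_{i+1}` is
completed at one of its ends, and one of `σ[i, i+t-1]`, `σ[i+1, i+t]` is a circuit; dually for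
cocircuits. Since `σ[i, i+t-1]` and `σ[i+t-1, i+2t-2]` share one element, they are not a circuit
and a cocircuit respectively. So circuit windows alternate, and `σ[i, i+t-1]` is a circuit exactly
when `σ[i+t, i+2t-1]` is a cocircuit.
-/

section Alternation

theorem iff_of_emod_two_eq {W : ℤ → Prop} (hW : ∀ i, W i ↔ ¬ W (i + 1)) {i j : ℤ}
    (hij : j % 2 = i % 2) : W i ↔ W j := by
  have hperiodic : Function.Periodic W 2 := fun k => propext <| by
    rw [hW k, hW (k + 1), not_not, add_assoc, one_add_one_eq_two]
  obtain ⟨k, rfl⟩ : ∃ k : ℤ, j = i + k * 2 := ⟨(j - i) / 2, by omega⟩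
  exact (hperiodic.int_mul k i).to_iff.symm

variable {V W : ℤ → Prop} {t : ℤ} (hV : ∀ i, V i ∨ V (i + 1)) (hW : ∀ i, W i ∨ W (i + 1))
  (hWV : ∀ i, W i → ¬ V (i + t - 1))
include hV hW hWV

theorem iff_not_succ_of_exclusive (i : ℤ) : W i ↔ ¬ W (i + 1) := by
  have hVt : V (i + t - 1) ∨ V (i + 1 + t - 1) := by convert hV (i + t - 1) using 2; ring
  have := hW i
  have := hWV i
  have := hWV (i + 1)
  tauto

theorem iff_shift_of_exclusive (i : ℤ) : W i ↔ V (i + t) := by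
  have hVt : V (i + t - 1) ∨ V (i + t) := by simpa using hV (i + t - 1)
  have hWVt : W (i + 1) → ¬ V (i + t) := by convert hWV (i + 1) using 3; ring
  have := hW i
  have := hWV i
  tauto

end Alternation

section InsertInter

variable {X Y : Set α} {x y : α} (h : ∀ z, insert x X ∩ insert y Y ≠ {z})
include h

theorem mem_iff_mem_of_inter_insert_ne_singleton (hXY : Disjoint X Y) : x ∈ Y ↔ y ∈ X := by
  constructor
  · intro hxY
    by_contra hyX
    exact h x (by grind)
  · intro hyX
    by_contra hxY
    exact h y (by grind)

theorem mem_or_mem_or_eq_of_inter_insert_ne_singleton {z : α} (hXY : X ∩ Y = {z}) :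
    x ∈ Y ∨ y ∈ X ∨ x = y := by
  by_contra! ⟨hxY, hyX, hxy⟩
  exact h z (by grind)

end InsertInter

section Segments

variable {n : ℕ} {e : ZMod n → α}

theorem seg_eq_image_Ico (e : ZMod n → α) (i : ℤ) (len : ℕ) :
    seg e i len = (fun x : ℤ => e x) '' Ico i (i + len) := by
  ext x
  constructor
  · rintro ⟨k, hk, rfl⟩
    exact ⟨i + k, by simp_all, rfl⟩
  · rintro ⟨y, ⟨hiy, hy⟩, rfl⟩
    refine ⟨(y - i).toNat, mem_Iio.2 (by omega), ?_⟩
    simp [Int.toNat_of_nonneg (sub_nonneg.2 hiy)]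

theorem seg_add_period (e : ZMod n → α) (i : ℤ) (len : ℕ) : seg e (i + n) len = seg e i len := by
  simp [seg]

theorem seg_eq_range (hn : 0 < n) (e : ZMod n → α) (i : ℤ) : seg e i n = range e := by
  have : NeZero n := ⟨hn.ne'⟩
  refine Subset.antisymm (by rintro _ ⟨k, -, rfl⟩; exact mem_range_self _) ?_
  rintro _ ⟨z, rfl⟩
  exact ⟨(z - i).val, ZMod.val_lt _, by simp⟩

theorem seg_succ_right (e : ZMod n → α) (i : ℤ) (len : ℕ) :
    seg e i (len + 1) = insert (e ((i + len : ℤ) : ZMod n)) (seg e i len) := by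
  rw [seg, Iio_add_one_eq_Iic, ← Iio_insert, image_insert_eq, seg]

theorem seg_succ_left (e : ZMod n → α) (i : ℤ) (len : ℕ) :
    seg e i (len + 1) = insert (e i) (seg e (i + 1) len) := by
  simp only [seg_eq_image_Ico]
  rw [← image_insert_eq (f := fun x : ℤ => e x)]
  congr 1
  ext x
  simp only [mem_Ico, mem_insert_iff]
  omega

variable (he : Function.Injective e)
include he

theorem eq_of_apply_eq {x y : ℤ} (hxy : |x - y| < n) (h : e x = e y) : x = y := by
  have hdvd : (n : ℤ) ∣ x - y := (ZMod.intCast_eq_intCast_iff_dvd_sub y x n).1 (he h).symm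
  exact sub_eq_zero.1 (Int.eq_zero_of_abs_lt_dvd hdvd hxy)

theorem injOn_Ico_period (i : ℤ) : InjOn (fun x : ℤ => e x) (Ico i (i + n)) := by
  rintro x ⟨hix, hx⟩ y ⟨hiy, hy⟩ h
  exact eq_of_apply_eq he (by rw [abs_lt]; omega) h

theorem apply_mem_seg_iff {i x : ℤ} {len : ℕ} (hx : i + len ≤ x + n) (hx' : x < i + n) :
    e x ∈ seg e i len ↔ i ≤ x ∧ x < i + len := by
  rw [seg_eq_image_Ico]
  refine ⟨?_, fun h => ⟨x, h, rfl⟩⟩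
  rintro ⟨y, ⟨hiy, hy⟩, h⟩
  obtain rfl : y = x := eq_of_apply_eq he (by rw [abs_lt]; omega) h
  exact ⟨hiy, hy⟩

theorem ncard_seg (i : ℤ) {len : ℕ} (hlen : len ≤ n) : (seg e i len).ncard = len := by
  have hsub : Ico i (i + len) ⊆ Ico i (i + n) := Ico_subset_Ico_right (by omega)
  rw [seg_eq_image_Ico, ((injOn_Ico_period he i).mono hsub).ncard_image,
    ← Finset.coe_Ico, ncard_coe_finset]
  simp

theorem seg_inter_seg {i j : ℤ} {len len' : ℕ} (hlen : len ≤ n) (hij : i ≤ j)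
    (hj : j + len' ≤ i + n) :
    seg e i len ∩ seg e j len' =
      (fun x : ℤ => e x) '' (Ico i (i + len) ∩ Ico j (j + len')) := by
  rw [seg_eq_image_Ico, seg_eq_image_Ico, (injOn_Ico_period he i).image_inter]
  · exact Ico_subset_Ico_right (by omega)
  · exact Ico_subset_Ico hij hj

theorem disjoint_seg_seg {i j : ℤ} {len len' : ℕ} (hij : i + len ≤ j) (hj : j + len' ≤ i + n) :
    Disjoint (seg e i len) (seg e j len') := by
  have hIco : Ico i (i + len) ∩ Ico j (j + len') = ∅ := by
    ext x
    simp only [mem_inter_iff, mem_Ico, mem_empty_iff_false, iff_false]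
    omega
  rw [disjoint_iff_inter_eq_empty, seg_inter_seg he (by omega) (by omega) hj, hIco, image_empty]

theorem seg_inter_seg_eq_singleton {i j : ℤ} {len : ℕ} (hlen : 1 ≤ len) (hij : j + 1 = i + len)
    (hj : j + len ≤ i + n) : seg e i len ∩ seg e j len = {e j} := by
  have hIco : Ico i (i + len) ∩ Ico j (j + len) = {j} := by
    ext x
    simp only [mem_inter_iff, mem_Ico, mem_singleton_iff]
    omega
  rw [seg_inter_seg he (by omega) (by omega) hj, hIco, image_singleton]

theorem exists_eq_insert_seg (hn : 0 < n) {i : ℤ} {len : ℕ} (hlen : len ≤ n) {C : Set α}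
    (hCe : C ⊆ range e) (hcard : C.ncard = len + 1) (hC : seg e i len ⊆ C) :
    ∃ x : ℤ, (i + len ≤ x ∧ x < i + n) ∧ C = insert (e x) (seg e i len) := by
  have hfin : (seg e i len).Finite := (finite_Iio len).image _
  obtain ⟨y, hy, rfl⟩ := (exists_eq_insert_iff_ncard hfin).2
    ⟨hC, by rw [ncard_seg he i hlen, hcard]⟩
  have hyn : y ∈ seg e i n := seg_eq_range hn e i ▸ hCe (mem_insert _ _)
  rw [seg_eq_image_Ico] at hyn
  obtain ⟨x, ⟨hix, hx⟩, rfl⟩ := hyn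
  rw [apply_mem_seg_iff he (by omega) hx] at hy
  exact ⟨x, by omega, rfl⟩

end Segments

section OrthogonalExtensions

/-- The orthogonality of two families of subsets of a cycle of length `n`: the `i`-th set of the
first family is the window `[i, i + w)` with the point `c i` added, the `j`-th set of the second
is `[j, j + w)` with `d j` added, and no set of one family meets a set of the other in exactly one
point. Only the consequences for disjoint windows and for windows sharing one point are recorded.
Points of the cycle are represented by integers, so that `[i + n, i + n + w)` is the `i`-th window
as seen from the period starting at `j ≥ i`. -/
structure OrthogonalTo (n w : ℤ) (c d : ℤ → ℤ) : Prop where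
  mem_iff_mem : ∀ i j, i + w ≤ j → j + w ≤ i + n →
    (j ≤ c i ∧ c i < j + w ↔ i + n ≤ d j ∧ d j < i + n + w)
  touching : ∀ i j, j + 1 = i + w →
    (j ≤ c i ∧ c i < j + w) ∨ (i + n ≤ d j ∧ d j < i + n + w) ∨ c i = d j

/-- The data extracted from a cyclic ordering: `c i` and `d i` are the positions, in the period
starting at `i`, of the elements that complete the `i`-th window of length `w` to a circuit and to
a cocircuit. -/
structure OrthogonalPair (n w : ℤ) (c d : ℤ → ℤ) : Prop where
  left_bounds : ∀ i, i + w ≤ c i ∧ c i < i + n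
  right_bounds : ∀ i, i + w ≤ d i ∧ d i < i + n
  left_right : OrthogonalTo n w c d
  right_left : OrthogonalTo n w d c

/-- Every `c i` is at cyclic distance at most `δ` from the window `[i, i + w)`. -/
def NearWindow (n w δ : ℤ) (c : ℤ → ℤ) : Prop :=
  ∀ i, c i < i + w + δ ∨ i + n - δ ≤ c i

variable {n w δ : ℤ} {c d : ℤ → ℤ}

theorem OrthogonalTo.reflect (h : OrthogonalTo n w d c) :
    OrthogonalTo n w (fun i => n - c (1 - w - i)) (fun i => n - d (1 - w - i)) where
  mem_iff_mem i j hij hj := by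
    have := h.mem_iff_mem (1 - w - j) (1 - w - i) (by omega) (by omega)
    omega
  touching i j hij := by
    have := h.touching (1 - w - j) (1 - w - i) (by omega)
    omega

theorem NearWindow.reflect (hd : NearWindow n w δ d) :
    NearWindow n w δ (fun i => n - d (1 - w - i)) := fun i => by
  have := hd (1 - w - i)
  dsimp only
  omega

namespace OrthogonalPair

variable (h : OrthogonalPair n w c d)
include h

theorem swap : OrthogonalPair n w d c :=
  ⟨h.right_bounds, h.left_bounds, h.right_left, h.left_right⟩

theorem reflect :
    OrthogonalPair n w (fun i => n - c (1 - w - i)) (fun i => n - d (1 - w - i)) where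
  left_bounds i := by have := h.left_bounds (1 - w - i); omega
  right_bounds i := by have := h.right_bounds (1 - w - i); omega
  left_right := h.right_left.reflect
  right_left := h.left_right.reflect

theorem right_eq_left_of_le (hn : 2 * w ≤ n) {i j : ℤ} (hij : j + 1 = i + w)
    (hi : j + w ≤ c i) (hpred : j + w ≤ c (i - 1)) : d j = c i := by
  have hdj := h.right_bounds j
  have htouch := h.left_right.touching i j hij
  have hdisj := h.left_right.mem_iff_mem (i - 1) j (by omega) (by omega)
  omega

theorem right_eq_left_of_lt (hn : 2 * w ≤ n) {i j : ℤ} (hji : i + 1 = j + w)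
    (hi : c i < j + n) (hsucc : c (i + 1) < j + n) : d j = c i := by
  have hdj := h.right_bounds j
  have htouch := h.right_left.touching j i hji
  have hdisj := h.right_left.mem_iff_mem j (i + 1) (by omega) (by omega)
  omega

theorem nearWindow_right (hw : 2 ≤ w) : NearWindow n w (2 * w - 2) d := by
  by_contra hfar
  simp only [NearWindow, not_forall, not_or, not_lt, not_le] at hfar
  obtain ⟨p, hlow, hhigh⟩ := hfar
  obtain ⟨q, hq⟩ : ∃ q, d p = q + n := ⟨d p - n, by ring⟩
  have hmem : ∀ k, q - w < k → k ≤ q → p ≤ c k ∧ c k < p + w := fun k hk hkq =>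
    (h.left_right.mem_iff_mem k p (by omega) (by omega)).2 (by omega)
  have hq_mem := hmem q (by omega) (by omega)
  have hq'_mem := hmem (q - w + 1) (by omega) (by omega)
  have hright : d (q + w - 1) = c q :=
    h.right_eq_left_of_le (by omega) (by omega) (by omega)
      (by have := hmem (q - 1); omega)
  have hleft : d (q - 2 * w + 2) = c (q - w + 1) :=
    h.right_eq_left_of_lt (by omega) (by omega) (by omega)
      (by have := hmem (q - w + 1 + 1); omega)
  have hp_right := h.right_left.mem_iff_mem (q + w - 1) p (by omega) (by omega)
  have hp_left := h.right_left.mem_iff_mem (q - 2 * w + 2) p (by omega) (by omega)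
  -- `c p` would lie in both of the disjoint windows at `q + w - 1` and `q - 2 * w + 2`.
  omega

theorem left_ne_of_nearWindow_right (hn : 6 * w - 4 ≤ n) (hδ : 1 ≤ δ) (hδw : δ + 1 ≤ 2 * w - 2)
    (hd : NearWindow n w (δ + 1) d) (i : ℤ) : c i ≠ i + w + δ := by
  intro hi
  have hdi : d (i + w + δ) = i + n + w - 1 := by
    have hmem := h.left_right.mem_iff_mem i (i + w + δ) (by omega) (by omega)
    have := hd (i + w + δ)
    omega
  have hsucc : c (i + 1) < i + 2 * w + δ := by
    have hmem := h.left_right.mem_iff_mem (i + 1) (i + w + δ) (by omega) (by omega)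
    omega
  have heq : d (i - w + 1) = c i :=
    h.right_eq_left_of_lt (by omega) (by omega) (by omega) (by omega)
  -- `c i` is at distance `δ + w` from the window at `i - w + 1`, too far for `d (i - w + 1)`.
  have := hd (i - w + 1)
  omega

theorem nearWindow_left_of_succ (hn : 6 * w - 4 ≤ n) (hδ : 1 ≤ δ) (hδw : δ + 1 ≤ 2 * w - 2)
    (hc : NearWindow n w (δ + 1) c) (hd : NearWindow n w (δ + 1) d) : NearWindow n w δ c := by
  intro i
  have hne := h.left_ne_of_nearWindow_right hn hδ hδw hd i
  have hne' := h.reflect.left_ne_of_nearWindow_right hn hδ hδw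
    hd.reflect (1 - w - i)
  rw [sub_sub_cancel] at hne'
  have := hc i
  omega

theorem nearWindow_one (hw : 2 ≤ w) (hn : 6 * w - 4 ≤ n) : NearWindow n w 1 c := by
  suffices hall : ∀ δ ≤ 2 * w - 2, 1 ≤ δ → NearWindow n w δ c ∧ NearWindow n w δ d from
    (hall 1 (by omega) le_rfl).1
  intro δ hδ
  induction δ, hδ using Int.leInductionDown with
  | base => exact fun _ => ⟨h.swap.nearWindow_right hw, h.nearWindow_right hw⟩
  | pred δ hδ ih =>
    intro hpos
    obtain ⟨hc, hd⟩ := ih (by omega)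
    rw [← sub_add_cancel δ 1] at hc hd
    exact ⟨h.nearWindow_left_of_succ hn hpos (by omega) hc hd,
      h.swap.nearWindow_left_of_succ hn hpos (by omega) hd hc⟩

theorem left_eq_or_eq (hw : 2 ≤ w) (hn : 6 * w - 4 ≤ n) (i : ℤ) :
    c i = i + w ∨ c i = i + n - 1 := by
  have := h.nearWindow_one hw hn i
  have := h.left_bounds i
  omega

end OrthogonalPair

end OrthogonalExtensions

section Circuits

theorem Cct.inter_ne_singleton {M : Matroid α} {C D : Set α} (hC : Cct M C) (hD : Cct M✶ D)
    (x : α) : C ∩ D ≠ {x} :=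
  Matroid.IsCircuit.inter_isCocircuit_ne_singleton (M := M) hC hD

variable {n w : ℕ} {e : ZMod n → α}

theorem orthogonalTo_of_inter_ne_singleton {c d : ℤ → ℤ} (he : Function.Injective e) (hw : 1 ≤ w)
    (hn : 2 * w ≤ n) (hc : ∀ i, i + w ≤ c i ∧ c i < i + n) (hd : ∀ i, i + w ≤ d i ∧ d i < i + n)
    (h : ∀ i j x, insert (e (c i)) (seg e i w) ∩ insert (e (d j)) (seg e j w) ≠ {x}) :
    OrthogonalTo n w c d where
  mem_iff_mem i j hij hj := by
    have hci := hc i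
    have hdj := hd j
    rw [← apply_mem_seg_iff he (by omega) (by omega), ← apply_mem_seg_iff he (by omega) (by omega),
      seg_add_period]
    exact mem_iff_mem_of_inter_insert_ne_singleton (h i j) (disjoint_seg_seg he hij hj)
  touching i j hij := by
    have hci := hc i
    have hdj := hd j
    rw [← apply_mem_seg_iff he (by omega) (by omega), ← apply_mem_seg_iff he (by omega) (by omega),
      seg_add_period]
    exact (mem_or_mem_or_eq_of_inter_insert_ne_singleton (h i j)
      (seg_inter_seg_eq_singleton he hw hij (by omega))).imp_right
      (Or.imp_right (eq_of_apply_eq he (by rw [abs_lt]; omega)))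

namespace CyclicPropOrd

variable {M : Matroid α}

theorem dual {t : ℕ} (he : CyclicPropOrd M t e) : CyclicPropOrd M✶ t e :=
  ⟨he.1, fun i => ⟨(he.2 i).2, by rw [M.dual_dual]; exact (he.2 i).1⟩⟩

variable (he : CyclicPropOrd M (w + 1) e)
include he

theorem exists_cct_insert_seg (hn : 0 < n) (hw : w ≤ n) (i : ℤ) :
    ∃ x : ℤ, (i + w ≤ x ∧ x < i + n) ∧ Cct M (insert (e x) (seg e i w)) := by
  obtain ⟨C, hC, hcard, hseg⟩ := (he.2 i).1
  have hCe : C ⊆ range e := he.1.2 ▸ hC.prop.subset_ground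
  obtain ⟨x, hx, rfl⟩ := exists_eq_insert_seg he.1.1 hn hw hCe hcard hseg
  exact ⟨x, hx, hC⟩

theorem exists_orthogonalPair (hw : 1 ≤ w) (hn : 2 * w ≤ n) :
    ∃ c d : ℤ → ℤ, OrthogonalPair n w c d ∧ ∀ i, Cct M (insert (e (c i)) (seg e i w)) := by
  choose c hc hcC using he.exists_cct_insert_seg (by omega) (by omega)
  choose d hd hdD using he.dual.exists_cct_insert_seg (by omega) (by omega)
  refine ⟨c, d, ⟨hc, hd, ?_, ?_⟩, hcC⟩
  · exact orthogonalTo_of_inter_ne_singleton he.1.1 hw hn hc hd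
      fun i j => (hcC i).inter_ne_singleton (hdD j)
  · exact orthogonalTo_of_inter_ne_singleton he.1.1 hw hn hd hc
      fun i j x => inter_comm _ _ ▸ (hcC j).inter_ne_singleton (hdD i) x

theorem cct_seg_or_cct_seg_succ (hw : 2 ≤ w) (hn : 6 * w - 4 ≤ n) (i : ℤ) :
    Cct M (seg e i (w + 1)) ∨ Cct M (seg e (i + 1) (w + 1)) := by
  obtain ⟨c, d, hcd, hC⟩ := he.exists_orthogonalPair (by omega) (by omega)
  have hCi := hC (i + 1)
  rcases hcd.left_eq_or_eq (by omega) (by omega) (i + 1) with hi | hi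
  · right
    rwa [seg_succ_right, ← hi]
  · left
    have hperiod : e (c (i + 1)) = e i := by rw [hi]; simp
    rwa [seg_succ_left, ← hperiod]

end CyclicPropOrd

theorem not_cct_dual_seg_of_cct_seg {M : Matroid α} {t : ℕ} (he : Function.Injective e)
    (ht : 1 ≤ t) (hn : 2 * t ≤ n + 1) {i : ℤ} (hC : Cct M (seg e i t)) :
    ¬ Cct M✶ (seg e (i + t - 1) t) := fun hD =>
  hC.inter_ne_singleton hD _ (seg_inter_seg_eq_singleton he ht (by omega) (by omega))

end Circuits

theorem statement_2_general (M : Matroid α) (t n : ℕ) (ht : 3 ≤ t) (hn : 6 * t - 10 ≤ n)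
    (e : ZMod n → α) (he : CyclicPropOrd M t e) :
    (∀ i : ℤ, Xor (Cct M (seg e i t)) (Cct M (seg e (i + 1) t))) ∧
    (∀ i j : ℤ, j % 2 = (i + t) % 2 → (Cct M (seg e i t) ↔ Cct M✶ (seg e j t))) ∧
    (∀ i j : ℤ, j % 2 = i % 2 → (Cct M (seg e i t) ↔ Cct M (seg e j t))) := by
  obtain ⟨w, rfl⟩ : ∃ w, t = w + 1 := ⟨t - 1, by omega⟩
  have hcircuit := he.cct_seg_or_cct_seg_succ (by omega) (by omega)
  have hcocircuit := he.dual.cct_seg_or_cct_seg_succ (by omega) (by omega)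
  have hexclusive (i : ℤ) (hC : Cct M (seg e i (w + 1))) :=
    not_cct_dual_seg_of_cct_seg he.1.1 (by omega) (by omega) hC
  have halternate := iff_not_succ_of_exclusive hcocircuit hcircuit hexclusive
  have hparity {i j : ℤ} (hij : j % 2 = i % 2) := iff_of_emod_two_eq halternate hij
  refine ⟨fun i => xor_iff_iff_not.2 (halternate i), fun i j hij => ?_, fun i j => hparity⟩
  rw [hparity (j := j - (w + 1 : ℕ)) (by omega),
    iff_shift_of_exclusive hcocircuit hcircuit hexclusive, sub_add_cancel]

/-- With `t ≥ 4` even and `n ≥ 6t-10`: (i) exactly one of two consecutive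
windows of `t` consecutive elements is a circuit; (ii) a window is a circuit iff it is a
cocircuit; (iii) circuit windows occur at indices of a fixed parity. -/
theorem statement_2 (M : Matroid α) (t n : ℕ) (ht : 4 ≤ t) (hteven : Even t)
    (hn : 6 * t - 10 ≤ n) (e : ZMod n → α) (he : CyclicPropOrd M t e) :
    (∀ i : ℤ, Xor' (Cct M (seg e i t)) (Cct M (seg e (i + 1) t))) ∧
    (∀ i : ℤ, Cct M (seg e i t) ↔ Cct M✶ (seg e i t)) ∧
    (∀ i j : ℤ, j % 2 = i % 2 → Cct M (seg e i t) → Cct M (seg e j t)) := by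
  obtain ⟨hxor, hdual, hparity⟩ := statement_2_general M t n (by omega) hn e he
  have hshift (i : ℤ) : i % 2 = (i + t) % 2 := by have := hteven.two_dvd; omega
  exact ⟨hxor, fun i => hdual i i (hshift i), fun i j hij => (hparity i j hij).1⟩

end CyclicArr
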